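/- Let a_1, …, a_N ∈ ℝ^d and T > 0, and let F*(z) = -T * log (Σ_i exp(-‖z - a_i‖² / (2T))) with distance-softmax weights q_i(z) = exp(-‖z - a_i‖²/(2T)) / (Σ_j exp(-‖z - a_j‖²/(2T))). Then a point z ∈ ℝ^d is a stationary point of F* (i.e. ∇F*(z) = 0) if and only if z equals the attention-weighted average of the a_i: z = Σ_i q_i(z) a_i. -/

import Mathlib

/-!
Differentiating the log-sum-exp of `-‖z - a i‖² / (2T)` gives
`∇F*(z) = ∑ i, q i (z) • (z - a i)`, and since the weights sum to one this is
`z - ∑ i, q i (z) • a i` (`hasGradientAt_freeEnergy`). It vanishes exactly when `z` is the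
weighted average.
-/

open RealInnerProductSpace

/-- The distance-softmax weights
`q i (z) = exp(-‖z - a i‖²/(2T)) / ∑ j exp(-‖z - a j‖²/(2T))`. -/
noncomputable def distSoftmaxWeight {d N : ℕ} (T : ℝ) (a : Fin N → EuclideanSpace ℝ (Fin d))
    (z : EuclideanSpace ℝ (Fin d)) (i : Fin N) : ℝ :=
  Real.exp (-‖z - a i‖ ^ 2 / (2 * T)) / ∑ j, Real.exp (-‖z - a j‖ ^ 2 / (2 * T))

/-- The weights form a probability vector; positivity of the partition function needs `N ≥ 1`. -/
lemma sum_distSoftmaxWeight {d N : ℕ} (hN : 1 ≤ N) (T : ℝ)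
    (a : Fin N → EuclideanSpace ℝ (Fin d)) (z : EuclideanSpace ℝ (Fin d)) :
    ∑ i, distSoftmaxWeight T a z i = 1 := by
  have : Nonempty (Fin N) := ⟨⟨0, hN⟩⟩
  have hpos : 0 < ∑ j, Real.exp (-‖z - a j‖ ^ 2 / (2 * T)) :=
    Finset.sum_pos (fun i _ => Real.exp_pos _) Finset.univ_nonempty
  simp only [distSoftmaxWeight]
  rw [← Finset.sum_div, div_self hpos.ne']

/-- The free energy is differentiable, with gradient the displacement of `z` from its
attention-weighted average. -/
lemma hasGradientAt_freeEnergy {d N : ℕ} (hN : 1 ≤ N) {T : ℝ} (hT : 0 < T)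
    (a : Fin N → EuclideanSpace ℝ (Fin d)) (z : EuclideanSpace ℝ (Fin d)) :
    HasGradientAt
      (fun z : EuclideanSpace ℝ (Fin d) =>
        -T * Real.log (∑ i, Real.exp (-‖z - a i‖ ^ 2 / (2 * T))))
      (z - ∑ i, distSoftmaxWeight T a z i • a i) z := by
  have : Nonempty (Fin N) := ⟨⟨0, hN⟩⟩
  have hpos : 0 < ∑ j, Real.exp (-‖z - a j‖ ^ 2 / (2 * T)) :=
    Finset.sum_pos (fun i _ => Real.exp_pos _) Finset.univ_nonempty
  have hterm : ∀ i ∈ Finset.univ, HasFDerivAt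
      (fun z : EuclideanSpace ℝ (Fin d) => Real.exp (-‖z - a i‖ ^ 2 / (2 * T)))
      (Real.exp (-‖z - a i‖ ^ 2 / (2 * T)) • ((-T⁻¹) • innerSL ℝ (z - a i))) z := by
    intro i _
    have hsq := ((hasFDerivAt_id z).sub_const (a i)).norm_sq
    have hexp := (hsq.const_mul (-(2 * T)⁻¹)).exp
    have hfun : (fun x : EuclideanSpace ℝ (Fin d) => Real.exp (-‖x - a i‖ ^ 2 / (2 * T)))
        = fun x => Real.exp (-(2 * T)⁻¹ * ‖id x - a i‖ ^ 2) := by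
      funext x
      congr 1
      simp only [id]
      ring
    rw [hfun]
    refine hexp.congr_fderiv ?_
    ext w
    have he : -‖z - a i‖ ^ 2 / (2 * T) = -(2 * T)⁻¹ * ‖z - a i‖ ^ 2 := by ring
    rw [he]
    simp only [smul_apply, ContinuousLinearMap.comp_apply, id,
      ContinuousLinearMap.id_apply, smul_eq_mul, nsmul_eq_mul, Nat.cast_ofNat]
    field_simp
  have hF := ((HasFDerivAt.fun_sum hterm).log hpos.ne').const_mul (-T)
  rw [hasGradientAt_iff_hasFDerivAt]
  refine hF.congr_fderiv ?_
  -- Since the weights sum to one, the gradient is the weighted mean of the forces `z - a i`.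
  have havg : z - ∑ i, distSoftmaxWeight T a z i • a i
      = ∑ i, distSoftmaxWeight T a z i • (z - a i) := by
    simp only [smul_sub, Finset.sum_sub_distrib, ← Finset.sum_smul,
      sum_distSoftmaxWeight hN, one_smul]
  rw [havg]
  ext w
  simp only [InnerProductSpace.toDual_apply_apply, sum_inner, real_inner_smul_left,
    smul_apply, sum_apply, smul_eq_mul,
    innerSL_apply_apply, distSoftmaxWeight, Finset.mul_sum]
  refine Finset.sum_congr rfl fun i _ => ?_
  field_simp

/-- **Stationary points of the elastic-potential Helmholtz free energy.**
`z` is a stationary point of `F*(z) = -T log ∑ i exp(-‖z - a i‖²/(2T))` if and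
only if `z` equals the attention-weighted average `∑ i q i (z) • a i`. -/
theorem free_energy_elastic_stationary_iff (d N : ℕ) (hN : 1 ≤ N) (T : ℝ) (hT : 0 < T)
    (a : Fin N → EuclideanSpace ℝ (Fin d)) (z : EuclideanSpace ℝ (Fin d)) :
    gradient
        (fun z : EuclideanSpace ℝ (Fin d) =>
          -T * Real.log (∑ i, Real.exp (-‖z - a i‖ ^ 2 / (2 * T)))) z = 0
      ↔ z = ∑ i, distSoftmaxWeight T a z i • a i := by
  rw [(hasGradientAt_freeEnergy hN hT a z).gradient, sub_eq_zero]
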